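/- (Bound on the magnetic contribution to the Eulerian moment.) Let n ≥ 1, t > 0, let g ≥ 0 be a measurable function on ℝ³×ℝ³ with ∫∫ g < ∞ and ∫∫ |x − t v|^n g(x,v) dx dv < ∞, and let B : ℝ³ → ℝ³ be measurable with ‖B‖_{L^∞} < ∞ and ‖x × B(x)‖_{L^∞_x} < ∞. Then n t ∫∫ |x − t v|^{n−2} (x − t v) · (v × B(x)) g(x,v) dx dv ≤ n ‖B‖_{L^∞} ∫∫ |x − t v|^n g dx dv + n ‖x × B(x)‖_{L^∞_x} ( ∫∫ g dx dv )^{1/n} ( ∫∫ |x − t v|^n g dx dv )^{(n−1)/n}. -/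

import Mathlib

/-!
Write `w = x - t v`. Since `t v = x - w` and `w · (w × B) = 0`, the integrand times `t` equals
`|w|^(n-2) w · (x × B) g`, which is at most `Cb |w|^(n-1) g` in absolute value
(`abs_magnetic_integrand_le`). The Hölder inequality, in the form
`∫ F^(1/n) G^((n-1)/n) ≤ (∫ F)^(1/n) (∫ G)^((n-1)/n)` with `F = g` and `G = |w|^n g`, bounds the
integral by the second term of the right-hand side; the first term is nonnegative.
-/

open MeasureTheory Real Set
open scoped ENNReal NNReal RealInnerProductSpace

noncomputable section

abbrev E3 := EuclideanSpace ℝ (Fin 3)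

/-- the cross product on `ℝ³`. -/
def cross3 (a b : E3) : E3 :=
  (WithLp.equiv 2 (Fin 3 → ℝ)).symm
    ![a 1 * b 2 - a 2 * b 1, a 2 * b 0 - a 0 * b 2, a 0 * b 1 - a 1 * b 0]

lemma mul_inner_cross3 (t : ℝ) (x v b : E3) :
    t * ⟪x - t • v, cross3 v b⟫ = ⟪x - t • v, cross3 x b⟫ := by
  simp [cross3, PiLp.inner_apply, Fin.sum_univ_three]
  ring

lemma abs_magnetic_integrand_le (n : ℕ) (t Cb γ : ℝ) (x v b : E3)
    (hγ : 0 ≤ γ) (hCb : ‖cross3 x b‖ ≤ Cb) :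
    |t * (‖x - t • v‖ ^ ((n : ℝ) - 2) * ⟪x - t • v, cross3 v b⟫ * γ)|
      ≤ Cb * (‖x - t • v‖ ^ ((n : ℝ) - 1) * γ) := by
  have hCb0 : 0 ≤ Cb := (norm_nonneg _).trans hCb
  have e : t * (‖x - t • v‖ ^ ((n : ℝ) - 2) * ⟪x - t • v, cross3 v b⟫ * γ)
      = ‖x - t • v‖ ^ ((n : ℝ) - 2) * ⟪x - t • v, cross3 x b⟫ * γ := by
    rw [← mul_inner_cross3]; ring
  rw [e]
  generalize x - t • v = w
  rcases eq_or_ne w 0 with rfl | hw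
  · simp only [inner_zero_left, mul_zero, zero_mul, abs_zero]
    positivity
  · have hw' : 0 < ‖w‖ := norm_pos_iff.mpr hw
    have hpow : ‖w‖ ^ ((n : ℝ) - 1) = ‖w‖ ^ ((n : ℝ) - 2) * ‖w‖ := by
      rw [← Real.rpow_add_one hw'.ne']
      congr 1
      ring
    have hin : |⟪w, cross3 x b⟫| ≤ ‖w‖ * Cb :=
      (abs_real_inner_le_norm _ _).trans (by gcongr)
    rw [abs_mul, abs_mul, abs_of_nonneg hγ, abs_of_nonneg (by positivity), hpow]
    calc ‖w‖ ^ ((n : ℝ) - 2) * |⟪w, cross3 x b⟫| * γ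
        ≤ ‖w‖ ^ ((n : ℝ) - 2) * (‖w‖ * Cb) * γ := by gcongr
      _ = Cb * (‖w‖ ^ ((n : ℝ) - 2) * ‖w‖ * γ) := by ring

/-- The factorisation `r^(n-1) γ = γ^(1/n) (r^n γ)^((n-1)/n)` behind the Hölder step. The case
`n = 1`, `r = 0` relies on the convention `0 ^ 0 = 1`. -/
lemma ofReal_moment_eq (n : ℕ) (hn : 1 ≤ n) (r γ : ℝ) (hr : 0 ≤ r) (hγ : 0 ≤ γ) :
    ENNReal.ofReal (r ^ ((n : ℝ) - 1) * γ)
      = ENNReal.ofReal γ ^ (1 / (n : ℝ))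
        * ENNReal.ofReal (r ^ (n : ℝ) * γ) ^ (((n : ℝ) - 1) / n) := by
  have hn1 : (1 : ℝ) ≤ n := by exact_mod_cast hn
  have hn0 : (n : ℝ) ≠ 0 := by positivity
  have hq : 0 ≤ ((n : ℝ) - 1) / n := div_nonneg (by linarith) (by linarith)
  rw [ENNReal.ofReal_rpow_of_nonneg hγ (by positivity),
    ENNReal.ofReal_rpow_of_nonneg (by positivity) hq, ← ENNReal.ofReal_mul (by positivity)]
  congr 1
  rw [Real.mul_rpow (by positivity) hγ, ← Real.rpow_mul hr, mul_div_cancel₀ _ hn0,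
    mul_left_comm, ← Real.rpow_add_of_nonneg hγ (by positivity) hq]
  have : 1 / (n : ℝ) + ((n : ℝ) - 1) / n = 1 := by field_simp; ring
  rw [this, Real.rpow_one]

/-- **Bound on the magnetic contribution to the Eulerian moment.** For `n ≥ 1`, `t > 0`,
`g ≥ 0` with `∫∫ g < ∞`, `∫∫ |x − tv|^n g < ∞`, and a magnetic field `B` with
`‖B‖_∞ ≤ CB` and `‖x × B(x)‖_∞ ≤ Cb`:
`nt∫∫ |x−tv|^{n−2}(x−tv)·(v×B(x)) g ≤ n‖B‖_∞ ∫∫ |x−tv|^n g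
  + n‖x×B(x)‖_∞ (∫∫ g)^{1/n} (∫∫ |x−tv|^n g)^{(n−1)/n}`. -/
theorem magnetic_eulerian_moment_bound
    (n : ℕ) (hn : 1 ≤ n) (t : ℝ) (ht : 0 < t)
    (g : E3 × E3 → ℝ) (hgmeas : Measurable g) (hg0 : ∀ z, 0 ≤ g z)
    (hgint : (∫⁻ z : E3 × E3, ENNReal.ofReal (g z)) < ⊤)
    (hgmom : (∫⁻ z : E3 × E3, ENNReal.ofReal (‖z.1 - t • z.2‖ ^ (n : ℝ) * g z)) < ⊤)
    (B : E3 → E3) (hBmeas : Measurable B)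
    (CB Cb : ℝ) (hCB : ∀ x, ‖B x‖ ≤ CB) (hCb : ∀ x, ‖cross3 x (B x)‖ ≤ Cb) :
    (n : ℝ) * t * ∫ z : E3 × E3,
        ‖z.1 - t • z.2‖ ^ ((n : ℝ) - 2) * ⟪z.1 - t • z.2, cross3 z.2 (B z.1)⟫ * g z
      ≤ (n : ℝ) * CB * (∫⁻ z : E3 × E3,
            ENNReal.ofReal (‖z.1 - t • z.2‖ ^ (n : ℝ) * g z)).toReal
        + (n : ℝ) * Cb * ((∫⁻ z : E3 × E3, ENNReal.ofReal (g z)).toReal) ^ (1 / (n : ℝ))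
            * ((∫⁻ z : E3 × E3,
                ENNReal.ofReal (‖z.1 - t • z.2‖ ^ (n : ℝ) * g z)).toReal)
              ^ (((n : ℝ) - 1) / n) := by
  have hn1 : (1 : ℝ) ≤ n := by exact_mod_cast hn
  have hn0 : (n : ℝ) ≠ 0 := by positivity
  have hp : 0 ≤ 1 / (n : ℝ) := by positivity
  have hq : 0 ≤ ((n : ℝ) - 1) / n := div_nonneg (by linarith) (by linarith)
  have hpq : 1 / (n : ℝ) + ((n : ℝ) - 1) / n = 1 := by field_simp; ring
  have hCB0 : 0 ≤ CB := (norm_nonneg _).trans (hCB 0)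
  have hCb0 : 0 ≤ Cb := (norm_nonneg _).trans (hCb 0)
  set M := ∫⁻ z : E3 × E3, ENNReal.ofReal (‖z.1 - t • z.2‖ ^ (n : ℝ) * g z) with hM
  set N := ∫⁻ z : E3 × E3, ENNReal.ofReal (g z) with hN
  have hHolder : ∫⁻ z : E3 × E3, ENNReal.ofReal (‖z.1 - t • z.2‖ ^ ((n : ℝ) - 1) * g z)
      ≤ N ^ (1 / (n : ℝ)) * M ^ (((n : ℝ) - 1) / n) := by
    simp_rw [fun z : E3 × E3 =>
      ofReal_moment_eq n hn ‖z.1 - t • z.2‖ (g z) (norm_nonneg _) (hg0 z)]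
    exact ENNReal.lintegral_mul_norm_pow_le (by fun_prop) (by fun_prop) hp hq hpq
  have hfin : ENNReal.ofReal Cb * (N ^ (1 / (n : ℝ)) * M ^ (((n : ℝ) - 1) / n)) ≠ ⊤ :=
    ENNReal.mul_ne_top ENNReal.ofReal_ne_top (ENNReal.mul_ne_top
      (ENNReal.rpow_ne_top_of_nonneg hp hgint.ne) (ENNReal.rpow_ne_top_of_nonneg hq hgmom.ne))
  -- Bounding by the `∫⁻` of the norm needs no integrability of the integrand.
  have key : t * ∫ z : E3 × E3,
        ‖z.1 - t • z.2‖ ^ ((n : ℝ) - 2) * ⟪z.1 - t • z.2, cross3 z.2 (B z.1)⟫ * g z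
      ≤ Cb * (N.toReal ^ (1 / (n : ℝ)) * M.toReal ^ (((n : ℝ) - 1) / n)) := by
    rw [← integral_const_mul]
    refine (Real.le_norm_self _).trans ((norm_integral_le_lintegral_norm _).trans ?_)
    have h := ENNReal.toReal_mono hfin (calc
      ∫⁻ z : E3 × E3, ENNReal.ofReal ‖t * (‖z.1 - t • z.2‖ ^ ((n : ℝ) - 2)
            * ⟪z.1 - t • z.2, cross3 z.2 (B z.1)⟫ * g z)‖
          ≤ ∫⁻ z : E3 × E3, ENNReal.ofReal Cb
              * ENNReal.ofReal (‖z.1 - t • z.2‖ ^ ((n : ℝ) - 1) * g z) := by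
            refine lintegral_mono fun z => ?_
            rw [← ENNReal.ofReal_mul hCb0]
            exact ENNReal.ofReal_le_ofReal
              (abs_magnetic_integrand_le n t Cb (g z) z.1 z.2 (B z.1) (hg0 z) (hCb z.1))
      _ = ENNReal.ofReal Cb
            * ∫⁻ z : E3 × E3, ENNReal.ofReal (‖z.1 - t • z.2‖ ^ ((n : ℝ) - 1) * g z) :=
            lintegral_const_mul' _ _ ENNReal.ofReal_ne_top
      _ ≤ ENNReal.ofReal Cb * (N ^ (1 / (n : ℝ)) * M ^ (((n : ℝ) - 1) / n)) := by gcongr)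
    rwa [ENNReal.toReal_mul, ENNReal.toReal_mul, ENNReal.toReal_ofReal hCb0,
      ← ENNReal.toReal_rpow, ← ENNReal.toReal_rpow] at h
  have hfirst : 0 ≤ (n : ℝ) * CB * M.toReal := by positivity
  have := mul_le_mul_of_nonneg_left key (by positivity : (0 : ℝ) ≤ n)
  linarith
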